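/- arXiv:1703.06175 — 3 statements merged into one kernel-verified Lean document; each statement's English description precedes it below -/
import Mathlib

section
/- Let g be a ℤ-graded Lie algebra over ℂ satisfying (P1) and (P2), and let p = ⊕_{j∈ℤ} p_j be a parabolic subalgebra of g. If p_{−k} ≠ 0 for some k > 0, then p_{−k+1} ≠ 0. -/
namespace Paper

variable {L : Type*} [LieRing L] [LieAlgebra ℂ L]

/-- A `ℤ`-graded Lie algebra over `ℂ`: a Lie algebra `L` together with an internal
direct sum decomposition `L = ⊕_{j ∈ ℤ} g_j` with `⁅g_i, g_j⁆ ⊆ g_{i+j}`. -/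
structure GradedLie (L : Type*) [LieRing L] [LieAlgebra ℂ L] where
  g : ℤ → Submodule ℂ L
  internal : DirectSum.IsInternal g
  bracket_mem : ∀ i j : ℤ, ∀ x ∈ g i, ∀ y ∈ g j, ⁅x, y⁆ ∈ g (i + j)

/-- Property (P1): `g₀` is commutative. -/
def P1 (G : GradedLie L) : Prop := ∀ x ∈ G.g 0, ∀ y ∈ G.g 0, ⁅x, y⁆ = (0 : L)

/-- Property (P2): if `a ∈ g_{-k}` (`k > 0`) and `⁅a, g₁⁆ = 0` then `a = 0`. -/
def P2 (G : GradedLie L) : Prop :=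
  ∀ k : ℤ, 0 < k → ∀ a ∈ G.g (-k), (∀ x ∈ G.g 1, ⁅a, x⁆ = (0 : L)) → a = 0

/-- A parabolic subalgebra of a graded Lie algebra, given by its graded pieces:
`p_j ⊆ g_j`, `p_j = g_j` for `j ≥ 0`, `p_j ≠ 0` for some `j < 0`, and `p` is
closed under the bracket. -/
def IsParabolic (G : GradedLie L) (p : ℤ → Submodule ℂ L) : Prop :=
  (∀ j, p j ≤ G.g j) ∧ (∀ j, 0 ≤ j → p j = G.g j) ∧
  (∃ j, j < 0 ∧ p j ≠ ⊥) ∧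
  (∀ i j : ℤ, ∀ x ∈ p i, ∀ y ∈ p j, ⁅x, y⁆ ∈ p (i + j))

/-- In a `ℤ`-graded Lie algebra over `ℂ` satisfying (P1) and (P2),
if `p` is a parabolic subalgebra and `p_{-k} ≠ 0` for some `k > 0`, then
`p_{-k+1} ≠ 0`. -/
theorem statement2 (G : GradedLie L) (hP1 : P1 G) (hP2 : P2 G)
    (p : ℤ → Submodule ℂ L) (hp : IsParabolic G p) (k : ℤ) (hk : 0 < k)
    (hne : p (-k) ≠ ⊥) : p (-k + 1) ≠ ⊥ := by
  intro hbot
  obtain ⟨hle, hnn, _, hbr⟩ := hp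
  apply hne
  rw [Submodule.eq_bot_iff]
  intro a ha
  refine hP2 k hk a (hle _ ha) fun x hx => ?_
  have h := hbr (-k) 1 a ha x (by rw [hnn 1 (by norm_num)]; exact hx)
  rw [hbot] at h
  exact (Submodule.mem_bot ℂ).1 h

end Paper
end

section
/- Let g be a ℤ-graded Lie algebra over ℂ satisfying (P1) and (P2), and let a ∈ g_{−1} be nonzero. Then p^a is a parabolic subalgebra of g containing a, and it is the minimal such: every parabolic subalgebra of g containing a contains p^a. -/
namespace Paper

variable {L : Type*} [LieRing L] [LieAlgebra ℂ L]

/-- Iterated brackets `[x_n, [⋯ [x_1, a] ⋯]]` with all `x_i ∈ g₀`. -/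
def iterSet (G : GradedLie L) (a : L) : ℕ → Set L
  | 0 => {a}
  | n + 1 => {v | ∃ x ∈ G.g 0, ∃ z ∈ iterSet G a n, v = ⁅x, z⁆}

/-- `p^a_{-1}`: the span of all iterated brackets of `g₀`-elements with `a`. -/
noncomputable def paMinusOne (G : GradedLie L) (a : L) : Submodule ℂ L :=
  Submodule.span ℂ (⋃ n : ℕ, iterSet G a n)

/-- Span of all brackets of elements of two subspaces. -/
noncomputable def bracketSpan (A B : Submodule ℂ L) : Submodule ℂ L :=
  Submodule.span ℂ {v | ∃ x ∈ A, ∃ y ∈ B, v = ⁅x, y⁆}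

/-- The negative graded pieces of `p^a`: `paNeg G a k = p^a_{-(k+1)}`, i.e.
`p^a_{-k-1} = ⁅p^a_{-1}, p^a_{-k}⁆` (as spans). -/
noncomputable def paNeg (G : GradedLie L) (a : L) : ℕ → Submodule ℂ L
  | 0 => paMinusOne G a
  | k + 1 => bracketSpan (paMinusOne G a) (paNeg G a k)

/-- The minimal parabolic family `p^a` attached to `a ∈ g_{-1}`:
`p^a_j = g_j` for `j ≥ 0` and the iterated bracket spans in negative degrees. -/
noncomputable def pa (G : GradedLie L) (a : L) (j : ℤ) : Submodule ℂ L :=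
  if 0 ≤ j then G.g j else paNeg G a ((-j).toNat - 1)

theorem pa_nonneg (G : GradedLie L) (a : L) {j : ℤ} (h : 0 ≤ j) : pa G a j = G.g j := by
  simp [pa, h]

theorem pa_neg (G : GradedLie L) (a : L) (k : ℕ) {j : ℤ} (h : j = -((k : ℤ) + 1)) :
    pa G a j = paNeg G a k := by
  have h1 : ¬ (0 ≤ j) := by omega
  have h2 : (-j).toNat - 1 = k := by omega
  simp [pa, h1, h2]

theorem bracketSpan_le_iff (A B C : Submodule ℂ L)
    (h : ∀ x ∈ A, ∀ y ∈ B, ⁅x, y⁆ ∈ C) : bracketSpan A B ≤ C := by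
  refine Submodule.span_le.2 ?_
  rintro v ⟨x, hx, y, hy, rfl⟩
  exact h x hx y hy

theorem mem_bracketSpan {A B : Submodule ℂ L} {x y : L} (hx : x ∈ A) (hy : y ∈ B) :
    ⁅x, y⁆ ∈ bracketSpan A B := Submodule.subset_span ⟨x, hx, y, hy, rfl⟩

theorem paMinusOne_le (G : GradedLie L) (a : L) (C : Submodule ℂ L) (ha : a ∈ C)
    (h : ∀ x ∈ G.g 0, ∀ y ∈ C, ⁅x, y⁆ ∈ C) : paMinusOne G a ≤ C := by
  refine Submodule.span_le.2 (Set.iUnion_subset fun n => ?_)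
  induction n with
  | zero => rintro v rfl; exact ha
  | succ n ih =>
    rintro v ⟨x, hx, z, hz, rfl⟩
    exact h x hx z (ih hz)

theorem a_mem (G : GradedLie L) (a : L) : a ∈ paMinusOne G a :=
  Submodule.subset_span (Set.mem_iUnion.2 ⟨0, rfl⟩)

/-- the submodule of elements that `ad x` sends into `C` -/
def adC (x : L) (C : Submodule ℂ L) : Submodule ℂ L :=
  C.comap (LieAlgebra.ad ℂ L x : L →ₗ[ℂ] L)

theorem mem_adC {x y : L} {C : Submodule ℂ L} : y ∈ adC x C ↔ ⁅x, y⁆ ∈ C := Iff.rfl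

theorem g0_minusOne (G : GradedLie L) (a : L) (x : L) (hx : x ∈ G.g 0) :
    ∀ y ∈ paMinusOne G a, ⁅x, y⁆ ∈ paMinusOne G a := by
  suffices h : paMinusOne G a ≤ adC x (paMinusOne G a) from fun y hy => h hy
  refine Submodule.span_le.2 (Set.iUnion_subset fun n => ?_)
  intro z hz
  exact Submodule.subset_span (Set.mem_iUnion.2 ⟨n + 1, x, hx, z, hz, rfl⟩)

theorem g0_paNeg (G : GradedLie L) (a : L) (x : L) (hx : x ∈ G.g 0) (k : ℕ) :
    ∀ y ∈ paNeg G a k, ⁅x, y⁆ ∈ paNeg G a k := by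
  induction k with
  | zero => exact g0_minusOne G a x hx
  | succ k ih =>
    suffices h : paNeg G a (k + 1) ≤ adC x (paNeg G a (k + 1)) from fun y hy => h hy
    refine bracketSpan_le_iff _ _ _ fun y hy z hz => ?_
    rw [mem_adC, leibniz_lie]
    exact add_mem (mem_bracketSpan (g0_minusOne G a x hx y hy) hz)
      (mem_bracketSpan hy (ih z hz))

/-- negative pieces lie in any bracket-closed family containing `g₀` and `a` -/
theorem paNeg_le (G : GradedLie L) (a : L) (p : ℤ → Submodule ℂ L) (ha : a ∈ p (-1))
    (h0 : G.g 0 ≤ p 0)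
    (hp : ∀ i j : ℤ, ∀ x ∈ p i, ∀ y ∈ p j, ⁅x, y⁆ ∈ p (i + j)) (k : ℕ) :
    paNeg G a k ≤ p (-((k : ℤ) + 1)) := by
  have h1 : paMinusOne G a ≤ p (-1) :=
    paMinusOne_le G a _ ha fun x hx y hy => by simpa using hp 0 (-1) x (h0 hx) y hy
  induction k with
  | zero => simpa [paNeg] using h1
  | succ k ih =>
    refine bracketSpan_le_iff _ _ _ fun y hy z hz => ?_
    have := hp _ _ y (h1 hy) z (ih hz)
    have e : (-1 : ℤ) + -((k : ℤ) + 1) = -(((k + 1 : ℕ) : ℤ) + 1) := by push_cast; ring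
    rwa [e] at this

theorem pa_le (G : GradedLie L) (a : L) (p : ℤ → Submodule ℂ L) (ha : a ∈ p (-1))
    (h0 : ∀ j, 0 ≤ j → G.g j ≤ p j)
    (hp : ∀ i j : ℤ, ∀ x ∈ p i, ∀ y ∈ p j, ⁅x, y⁆ ∈ p (i + j)) (j : ℤ) :
    pa G a j ≤ p j := by
  rcases le_or_gt 0 j with h | h
  · rw [pa_nonneg G a h]; exact h0 j h
  · obtain ⟨k, rfl⟩ : ∃ k : ℕ, j = -((k : ℤ) + 1) := ⟨(-j).toNat - 1, by omega⟩
    rw [pa_neg G a k rfl]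
    exact paNeg_le G a p ha (h0 0 le_rfl) hp k

theorem minusOne_pa (G : GradedLie L) (a : L) (ha : a ∈ G.g (-1)) (y : L)
    (hy : y ∈ paMinusOne G a) (i j : ℤ) (hij : i = j - 1) (z : L) (hz : z ∈ pa G a j) :
    ⁅y, z⁆ ∈ pa G a i := by
  subst hij
  have hyg : y ∈ G.g (-1) := by
    have := pa_le G a G.g ha (fun _ _ => le_rfl) G.bracket_mem (-1)
    rw [pa_neg G a 0 (by simp)] at this
    exact this hy
  rcases lt_trichotomy j 0 with h | h | h
  · obtain ⟨k, rfl⟩ : ∃ k : ℕ, j = -((k : ℤ) + 1) := ⟨(-j).toNat - 1, by omega⟩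
    rw [pa_neg G a k rfl] at hz
    rw [pa_neg G a (k + 1) (by push_cast; ring)]
    exact mem_bracketSpan hy hz
  · subst h
    rw [pa_nonneg G a le_rfl] at hz
    rw [pa_neg G a 0 (by simp), ← lie_skew]
    exact neg_mem (g0_minusOne G a z hz y hy)
  · rw [pa_nonneg G a h.le] at hz
    rw [pa_nonneg G a (by omega)]
    have := G.bracket_mem _ _ y hyg z hz
    rwa [show (-1 : ℤ) + j = j - 1 by ring] at this

theorem paNeg_pa (G : GradedLie L) (a : L) (ha : a ∈ G.g (-1)) (k : ℕ) :
    ∀ j : ℤ, ∀ z ∈ pa G a j, ∀ y ∈ paNeg G a k,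
      ⁅z, y⁆ ∈ pa G a (j + -((k : ℤ) + 1)) := by
  induction k with
  | zero =>
    intro j z hz y hy
    rw [← lie_skew]
    exact neg_mem (minusOne_pa G a ha y hy _ j (by simp; ring) z hz)
  | succ k ih =>
    intro j x hx
    suffices h : paNeg G a (k + 1) ≤ adC x (pa G a (j + -(((k + 1 : ℕ) : ℤ) + 1))) from
      fun y hy => h hy
    refine bracketSpan_le_iff _ _ _ fun y hy z hz => ?_
    rw [mem_adC, leibniz_lie]
    refine add_mem ?_ ?_
    · have h1 : ⁅x, y⁆ ∈ pa G a (j - 1) := by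
        rw [← lie_skew]
        exact neg_mem (minusOne_pa G a ha y hy _ j rfl x hx)
      have := ih (j - 1) _ h1 z hz
      rwa [show j - 1 + -((k : ℤ) + 1) = j + -(((k + 1 : ℕ) : ℤ) + 1) by push_cast; ring] at this
    · exact minusOne_pa G a ha y hy _ _ (by push_cast; ring) _ (ih j x hx z hz)

/-- For `0 ≠ a ∈ g_{-1}`, the family `p^a` is a parabolic subalgebra
of `g` containing `a`, and it is minimal among parabolic subalgebras containing `a`. -/
theorem statement3 (G : GradedLie L) (hP1 : P1 G) (hP2 : P2 G)
    (a : L) (ha : a ∈ G.g (-1)) (ha0 : a ≠ 0) :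
    IsParabolic G (pa G a) ∧ a ∈ pa G a (-1) ∧
    (∀ p : ℤ → Submodule ℂ L, IsParabolic G p → a ∈ p (-1) →
      ∀ j : ℤ, pa G a j ≤ p j) := by
  refine ⟨⟨pa_le G a G.g ha (fun _ _ => le_rfl) G.bracket_mem, fun j hj => pa_nonneg G a hj,
    ⟨-1, by norm_num, ?_⟩, ?_⟩, ?_, ?_⟩
  · rw [pa_neg G a 0 (by simp)]
    intro h
    have h1 : a ∈ paNeg G a 0 := a_mem G a
    rw [h] at h1
    exact ha0 ((Submodule.mem_bot ℂ).1 h1)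
  · intro i j x hx y hy
    rcases le_or_gt 0 j with h | h
    · rcases le_or_gt 0 i with h' | h'
      · rw [pa_nonneg G a (by omega)]
        rw [pa_nonneg G a h'] at hx
        rw [pa_nonneg G a h] at hy
        exact G.bracket_mem _ _ x hx y hy
      · obtain ⟨k, rfl⟩ : ∃ k : ℕ, i = -((k : ℤ) + 1) := ⟨(-i).toNat - 1, by omega⟩
        rw [pa_neg G a k rfl] at hx
        rw [← lie_skew, add_comm]
        exact neg_mem (paNeg_pa G a ha k j y hy x hx)
    · obtain ⟨k, rfl⟩ : ∃ k : ℕ, j = -((k : ℤ) + 1) := ⟨(-j).toNat - 1, by omega⟩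
      rw [pa_neg G a k rfl] at hy
      exact paNeg_pa G a ha k i x hx y hy
  · rw [pa_neg G a 0 (by simp)]
    exact a_mem G a
  · intro p hp hap j
    exact pa_le G a p hap (fun j hj => (hp.2.1 j hj).ge) hp.2.2.2 j

end Paper
end

section
/- Let g be a ℤ-graded Lie algebra over ℂ satisfying (P1) and (P2), and let a ∈ g_{−1} be nonzero. Then [p^a, p^a] ∩ g_0 = [a, g_1], i.e. the intersection of the derived algebra of p^a with g_0 equals the span of the brackets [a, x] with x ∈ g_1. -/
namespace Paper

variable {L : Type*} [LieRing L] [LieAlgebra ℂ L]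

theorem aux_iter_mem (G : GradedLie L) (a : L) (ha : a ∈ G.g (-1)) (n : ℕ) :
    ∀ z ∈ iterSet G a n, z ∈ G.g (-1) := by
  induction n with
  | zero => rintro z rfl; exact ha
  | succ n ih =>
    rintro z ⟨x, hx, w, hw, rfl⟩
    simpa using G.bracket_mem 0 (-1) x hx w (ih w hw)

theorem aux_one_le (G : GradedLie L) (a : L) (ha : a ∈ G.g (-1)) :
    paMinusOne G a ≤ G.g (-1) := by
  refine Submodule.span_le.2 fun z hz => ?_
  obtain ⟨n, hn⟩ := Set.mem_iUnion.1 hz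
  exact aux_iter_mem G a ha n z hn

theorem aux_neg_le (G : GradedLie L) (a : L) (ha : a ∈ G.g (-1)) (k : ℕ) :
    paNeg G a k ≤ G.g (-((k : ℤ) + 1)) := by
  induction k with
  | zero => simpa [paNeg] using aux_one_le G a ha
  | succ k ih =>
    refine Submodule.span_le.2 ?_
    rintro z ⟨x, hx, y, hy, rfl⟩
    have h := G.bracket_mem _ _ x (aux_one_le G a ha hx) y (ih hy)
    have e : (-1 : ℤ) + -((k : ℤ) + 1) = -(((k + 1 : ℕ) : ℤ) + 1) := by push_cast; ring
    rw [e] at h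
    exact h

/-- The span of the brackets of `a` with degree one. -/
noncomputable def auxT (G : GradedLie L) (a : L) : Submodule ℂ L :=
  Submodule.span ℂ {y | ∃ x ∈ G.g 1, y = ⁅a, x⁆}

theorem aux_iter_br (G : GradedLie L) (hP1 : P1 G) (a : L) (ha : a ∈ G.g (-1)) (n : ℕ) :
    ∀ z ∈ iterSet G a n, ∀ x ∈ G.g 1, ⁅z, x⁆ ∈ auxT G a := by
  induction n with
  | zero => rintro z rfl x hx; exact Submodule.subset_span ⟨x, hx, rfl⟩
  | succ n ih =>
    rintro z ⟨h, hh, w, hw, rfl⟩ x hx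
    rw [lie_lie]
    have h1 : ⁅w, x⁆ ∈ G.g 0 := by
      simpa using G.bracket_mem (-1) 1 w (aux_iter_mem G a ha n w hw) x hx
    have h2 : ⁅h, x⁆ ∈ G.g 1 := by simpa using G.bracket_mem 0 1 h hh x hx
    rw [hP1 h hh _ h1, zero_sub]
    exact Submodule.neg_mem _ (ih w hw _ h2)

theorem aux_one_br (G : GradedLie L) (hP1 : P1 G) (a : L) (ha : a ∈ G.g (-1)) :
    ∀ z ∈ paMinusOne G a, ∀ x ∈ G.g 1, ⁅z, x⁆ ∈ auxT G a := by
  intro z hz x hx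
  induction hz using Submodule.span_induction with
  | mem z hz =>
    obtain ⟨n, hn⟩ := Set.mem_iUnion.1 hz
    exact aux_iter_br G hP1 a ha n z hn x hx
  | zero => simp
  | add u v _ _ hu hv => rw [add_lie]; exact Submodule.add_mem _ hu hv
  | smul c u _ hu => rw [smul_lie]; exact Submodule.smul_mem _ _ hu

theorem aux_neg_br (G : GradedLie L) (hP1 : P1 G) (a : L) (ha : a ∈ G.g (-1)) (k : ℕ) :
    ∀ z ∈ paNeg G a k, ∀ x ∈ G.g ((k : ℤ) + 1), ⁅z, x⁆ ∈ auxT G a := by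
  induction k with
  | zero => simpa [paNeg] using aux_one_br G hP1 a ha
  | succ k ih =>
    intro z hz x hx
    unfold paNeg bracketSpan at hz
    induction hz using Submodule.span_induction with
    | mem z hz =>
      obtain ⟨u, hu, v, hv, rfl⟩ := hz
      rw [lie_lie]
      have h1 := G.bracket_mem _ _ v (aux_neg_le G a ha k hv) x hx
      have h2 := G.bracket_mem _ _ u (aux_one_le G a ha hu) x hx
      have e1 : -((k : ℤ) + 1) + (((k + 1 : ℕ) : ℤ) + 1) = 1 := by push_cast; ring
      have e2 : (-1 : ℤ) + (((k + 1 : ℕ) : ℤ) + 1) = k + 1 := by push_cast; ring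
      rw [e1] at h1
      rw [e2] at h2
      exact Submodule.sub_mem _ (aux_one_br G hP1 a ha u hu _ h1) (ih v hv _ h2)
    | zero => simp
    | add u v _ _ hu hv => rw [add_lie]; exact Submodule.add_mem _ hu hv
    | smul c u _ hu => rw [smul_lie]; exact Submodule.smul_mem _ _ hu

theorem aux_pa_le (G : GradedLie L) (a : L) (ha : a ∈ G.g (-1)) (j : ℤ) :
    pa G a j ≤ G.g j := by
  unfold pa
  split_ifs with h
  · exact le_rfl
  · have := aux_neg_le G a ha ((-j).toNat - 1)
    have e : -((((-j).toNat - 1 : ℕ) : ℤ) + 1) = j := by omega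
    rwa [e] at this

theorem aux_pa_br (G : GradedLie L) (hP1 : P1 G) (a : L) (ha : a ∈ G.g (-1)) (i j : ℤ)
    (hi : i < 0) (hij : i + j = 0) (x : L) (hx : x ∈ pa G a i) (y : L) (hy : y ∈ pa G a j) :
    ⁅x, y⁆ ∈ auxT G a := by
  have hy' := aux_pa_le G a ha j hy
  unfold pa at hx
  rw [if_neg (by omega)] at hx
  have e : j = (((-i).toNat - 1 : ℕ) : ℤ) + 1 := by omega
  rw [e] at hy'
  exact aux_neg_br G hP1 a ha _ x hx y hy'

theorem aux_pa_br_all (G : GradedLie L) (hP1 : P1 G) (a : L) (ha : a ∈ G.g (-1)) (i j : ℤ)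
    (x : L) (hx : x ∈ pa G a i) (y : L) (hy : y ∈ pa G a j) :
    ⁅x, y⁆ ∈ auxT G a ⊔ ⨆ (k : ℤ) (_ : k ≠ 0), G.g k := by
  have hx' := aux_pa_le G a ha i hx
  have hy' := aux_pa_le G a ha j hy
  by_cases hij : i + j = 0
  · refine Submodule.mem_sup_left ?_
    rcases lt_trichotomy i 0 with hi | hi | hi
    · exact aux_pa_br G hP1 a ha i j hi hij x hx y hy
    · subst hi
      obtain rfl : j = 0 := by omega
      rw [hP1 x hx' y hy']
      exact Submodule.zero_mem _
    · rw [← lie_skew]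
      exact Submodule.neg_mem _
        (aux_pa_br G hP1 a ha j i (by omega) (by omega) y hy x hx)
  · refine Submodule.mem_sup_right ?_
    exact Submodule.mem_iSup_of_mem (i + j)
      (Submodule.mem_iSup_of_mem hij (G.bracket_mem i j x hx' y hy'))

theorem aux_br_le (G : GradedLie L) (hP1 : P1 G) (a : L) (ha : a ∈ G.g (-1)) :
    bracketSpan (⨆ j : ℤ, pa G a j) (⨆ j : ℤ, pa G a j) ≤
      auxT G a ⊔ ⨆ (k : ℤ) (_ : k ≠ 0), G.g k := by
  refine Submodule.span_le.2 ?_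
  rintro z ⟨x, hx, y, hy, rfl⟩
  change ⁅x, y⁆ ∈ auxT G a ⊔ ⨆ (k : ℤ) (_ : k ≠ 0), G.g k
  refine Submodule.iSup_induction _
    (motive := fun x => ⁅x, y⁆ ∈ auxT G a ⊔ ⨆ (k : ℤ) (_ : k ≠ 0), G.g k) hx ?_ ?_ ?_
  · intro i x hx
    refine Submodule.iSup_induction _
      (motive := fun y => ⁅x, y⁆ ∈ auxT G a ⊔ ⨆ (k : ℤ) (_ : k ≠ 0), G.g k) hy ?_ ?_ ?_
    · intro j y hy
      exact aux_pa_br_all G hP1 a ha i j x hx y hy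
    · simp
    · intro u v hu hv
      rw [lie_add]; exact Submodule.add_mem _ hu hv
  · simp
  · intro u v hu hv
    rw [add_lie]; exact Submodule.add_mem _ hu hv

theorem aux_T_le (G : GradedLie L) (a : L) (ha : a ∈ G.g (-1)) : auxT G a ≤ G.g 0 := by
  refine Submodule.span_le.2 ?_
  rintro z ⟨x, hx, rfl⟩
  simpa using G.bracket_mem (-1) 1 a ha x hx

/-- For `0 ≠ a ∈ g_{-1}`, the intersection of the derived algebra of
`p^a` with `g₀` equals `[a, g₁]`, the span of all brackets `⁅a, x⁆` with `x ∈ g₁`. -/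
theorem statement4 (G : GradedLie L) (hP1 : P1 G) (hP2 : P2 G)
    (a : L) (ha : a ∈ G.g (-1)) (ha0 : a ≠ 0) :
    bracketSpan (⨆ j : ℤ, pa G a j) (⨆ j : ℤ, pa G a j) ⊓ G.g 0 =
      Submodule.span ℂ {y | ∃ x ∈ G.g 1, y = ⁅a, x⁆} := by
  apply le_antisymm
  · rintro z ⟨hz, hz0⟩
    obtain ⟨t, ht, w, hw, rfl⟩ := Submodule.mem_sup.1 (aux_br_le G hP1 a ha hz)
    have hw0 : w ∈ G.g 0 := by
      have := Submodule.sub_mem _ hz0 (aux_T_le G a ha ht)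
      simpa using this
    have hw' : w = 0 :=
      Submodule.disjoint_def.1 (G.internal.submodule_iSupIndep 0) w hw0 hw
    rw [hw', add_zero]
    exact ht
  · refine le_inf ?_ (aux_T_le G a ha)
    refine Submodule.span_le.2 ?_
    rintro z ⟨x, hx, rfl⟩
    refine Submodule.subset_span ⟨a, Submodule.mem_iSup_of_mem (-1) ?_, x,
      Submodule.mem_iSup_of_mem 1 ?_, rfl⟩
    · have h : a ∈ paMinusOne G a :=
        Submodule.subset_span (Set.mem_iUnion.2 ⟨0, rfl⟩)
      simpa [pa, paNeg] using h
    · simpa [pa] using hx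

end Paper
end
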